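/- arXiv:2010.13208 — 2 statements merged into one kernel-verified Lean document; each statement's English description precedes it below -/
import Mathlib

section
/- Let 𝒞 be an abelian category and let 𝒜 be a preresolving full additive subcategory with resdim_𝒜(𝒞) = n finite. Then for every (unbounded) cochain complex E• in 𝒞 there exist a cochain complex A• with all terms in 𝒜 and a chain map f : A• → E• which is a quasi-isomorphism. -/
open CategoryTheory CategoryTheory.Limits ZeroObject

universe v u

variable {C : Type u} [Category.{v} C] [Abelian C]

/-- A full additive subcategory of `C`, given as a predicate on objects:
closed under isomorphisms, containing the zero object, closed under binary biproducts. -/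
structure IsAdditiveClosed (𝒜 : C → Prop) : Prop where
  iso : ∀ {X Y : C}, (X ≅ Y) → 𝒜 X → 𝒜 Y
  zero : 𝒜 0
  biprod : ∀ {X Y : C}, 𝒜 X → 𝒜 Y → 𝒜 (X ⊞ Y)

/-- `𝒜` is deflation-closed: for every short exact sequence `0 → X → Y → Z → 0`
with `Y, Z ∈ 𝒜`, also `X ∈ 𝒜`. -/
def DeflationClosed (𝒜 : C → Prop) : Prop :=
  ∀ (S : ShortComplex C), S.ShortExact → 𝒜 S.X₂ → 𝒜 S.X₃ → 𝒜 S.X₁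

/-- Axiom (PR2): every object of `C` admits an epimorphism from an object of `𝒜`. -/
def PR2 (𝒜 : C → Prop) : Prop :=
  ∀ E : C, ∃ (A : C) (f : A ⟶ E), 𝒜 A ∧ Epi f

/-- `E` admits an exact sequence `0 → A⁻ⁿ → ⋯ → A⁰ → E → 0` with all `Aⁱ ∈ 𝒜`,
encoded as an everywhere-exact cochain complex with `E` placed in degree `1`. -/
def IsResolutionOfLength (𝒜 : C → Prop) (E : C) (n : ℕ) : Prop :=
  ∃ (R : CochainComplex C ℤ) (_ : R.X 1 ≅ E),
    (∀ k : ℤ, 1 < k → IsZero (R.X k)) ∧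
    (∀ k : ℤ, k < -(n : ℤ) → IsZero (R.X k)) ∧
    (∀ k : ℤ, -(n : ℤ) ≤ k → k ≤ 0 → 𝒜 (R.X k)) ∧
    (∀ k : ℤ, R.ExactAt k)

/-- The resolution dimension `resdim_𝒜 (E)`: the smallest `n` such that `E` admits an
`𝒜`-resolution of length `n`, and `∞` if no such `n` exists. -/
noncomputable def resdim (𝒜 : C → Prop) (E : C) : ℕ∞ :=
  sInf {m : ℕ∞ | ∃ n : ℕ, m = (n : ℕ∞) ∧ IsResolutionOfLength 𝒜 E n}

/-- `resdim_𝒜 (C)`: the supremum of `resdim_𝒜 (E)` over all objects `E`. -/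
noncomputable def resdimCat (𝒜 : C → Prop) : ℕ∞ :=
  ⨆ E : C, resdim 𝒜 E

/-!
Cover `E` degreewise by a contractible complex `P` with terms in `𝒜`. The kernel `K` of `P ⟶ E` has
terms one syzygy closer to `𝒜` than those of `E`, and the mapping cone of `K ⟶ P` is
quasi-isomorphic to `E`. An induction on the number of syzygies thus replaces `E` by iterated
mapping cones of complexes with terms in `𝒜`. It reaches `𝒜` after `n + 1` steps, since deflation
closedness makes the `(n + 1)`-st syzygies of an object of resolution dimension at most `n` lie in
`𝒜`, whichever covers are chosen.
-/

section Kernels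

noncomputable def kernelIsoOfIsPullback {W X Y Z : C} {fst : W ⟶ X} {snd : W ⟶ Y} {f : X ⟶ Z}
    {g : Y ⟶ Z} (sq : IsPullback fst snd f g) : kernel fst ≅ kernel g :=
  have := isIso_kernel_map_of_isPullback sq
  asIso (kernel.map _ _ _ _ sq.w)

noncomputable def pullbackKernelιIso {X Y Z : C} (f : X ⟶ Y) (g : Y ⟶ Z) :
    pullback (kernel.ι g) f ≅ kernel (f ≫ g) where
  hom := kernel.lift _ (pullback.snd _ _) (by
    rw [← pullback.condition_assoc, kernel.condition, comp_zero])
  inv := pullback.lift (kernel.lift _ (kernel.ι (f ≫ g) ≫ f) (by simp)) (kernel.ι _) (by simp)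
  hom_inv_id := by
    ext
    · simp [pullback.lift_snd_assoc, pullback.condition]
    · simp [pullback.lift_snd]
  inv_hom_id := by ext; simp [pullback.lift_snd]

noncomputable def kernelDescNegIso {X Y Z : C} (f : X ⟶ Z) (g : Y ⟶ Z) :
    kernel (biprod.desc f (-g)) ≅ pullback f g :=
  (limit.isLimit _).conePointUniqueUpToIso
    (Abelian.PullbackToBiproductIsKernel.isLimitPullbackToBiproduct f g)

noncomputable def kernelToCyclesIso (R : CochainComplex C ℤ) {i j : ℤ} (hij : i + 1 = j) :
    kernel (R.toCycles i j) ≅ R.cycles i :=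
  (kernelCompMono (R.toCycles i j) (R.iCycles j)).symm ≪≫
    kernelIsoOfEq (R.toCycles_i i j) ≪≫
      (limit.isLimit _).conePointUniqueUpToIso (R.cyclesIsKernel i j (by simp [← hij]))

lemma epi_toCycles_of_exactAt {R : CochainComplex C ℤ} {i j : ℤ} (hij : i + 1 = j)
    (hR : R.ExactAt j) : Epi (R.toCycles i j) := by
  obtain rfl : (ComplexShape.up ℤ).prev j = i := by simp [← hij]
  exact hR.epi_toCycles

end Kernels

section Syzygies

/-- `HasSyzygiesIn 𝒜 j X`: every `j`-th syzygy of `X` formed with epimorphisms from objects of `𝒜`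
belongs to `𝒜`. It quantifies over all covers, rather than asking for one, so that the condition
passes to extensions even though `𝒜` need not be closed under them. -/
def HasSyzygiesIn (𝒜 : ObjectProperty C) : ℕ → ObjectProperty C
  | 0, X => 𝒜 X
  | j + 1, X => ∀ ⦃A : C⦄ (f : A ⟶ X) [Epi f], 𝒜 A → HasSyzygiesIn 𝒜 j (kernel f)

variable {𝒜 : ObjectProperty C}

instance [𝒜.IsClosedUnderIsomorphisms] (j : ℕ) :
    (HasSyzygiesIn 𝒜 j).IsClosedUnderIsomorphisms where
  of_iso {X Y} e hX := by
    induction j generalizing X Y with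
    | zero => exact 𝒜.prop_of_iso e hX
    | succ j ih => exact fun A f _ hA ↦ ih (kernelCompMono f e.inv) (hX (f ≫ e.inv) hA)

lemma IsAdditiveClosed.isClosedUnderIsomorphisms (hadd : IsAdditiveClosed 𝒜) :
    𝒜.IsClosedUnderIsomorphisms where
  of_iso e hX := hadd.iso e hX

lemma shortExact_kernel {X Y : C} (f : X ⟶ Y) [Epi f] :
    (ShortComplex.mk (kernel.ι f) f (kernel.condition f)).ShortExact where
  exact := ShortComplex.exact_kernel f

lemma DeflationClosed.hasSyzygiesIn_one (hdef : DeflationClosed 𝒜) {X : C} (hX : 𝒜 X) :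
    HasSyzygiesIn 𝒜 1 X :=
  fun _ f _ hA ↦ hdef _ (shortExact_kernel f) hA hX

/-- A cover `f : B ⟶ Y` restricts to a cover of `kernel p` with the same kernel. -/
lemma HasSyzygiesIn.of_kernel [𝒜.IsClosedUnderIsomorphisms] {j : ℕ} {Y Z : C} (p : Y ⟶ Z) [Epi p]
    (hp : HasSyzygiesIn 𝒜 (j + 1) (kernel p)) (hZ : HasSyzygiesIn 𝒜 1 Z) :
    HasSyzygiesIn 𝒜 (j + 1) Y := by
  intro B f _ hB
  have hpull : 𝒜 (pullback (kernel.ι p) f) :=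
    𝒜.prop_of_iso (pullbackKernelιIso f p).symm (hZ (f ≫ p) hB)
  exact (HasSyzygiesIn 𝒜 j).prop_of_iso (kernelIsoOfIsPullback (.of_hasPullback (kernel.ι p) f))
    (hp (pullback.fst (kernel.ι p) f) hpull)

/-- Given covers `f : M ⟶ kernel p` and `g : N ⟶ Y`, the pullback of `f` and `g` over `Y` is both
the kernel of a cover `M ⊞ N ⟶ Y` and an extension of `kernel (g ≫ p)` by `kernel f`. -/
lemma HasSyzygiesIn.to_kernel (hadd : IsAdditiveClosed 𝒜) (hdef : DeflationClosed 𝒜) (hPR2 : PR2 𝒜)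
    {j : ℕ} {Y Z : C} (p : Y ⟶ Z) [Epi p] (hY : HasSyzygiesIn 𝒜 j Y)
    (hZ : HasSyzygiesIn 𝒜 1 Z) : HasSyzygiesIn 𝒜 j (kernel p) := by
  have := hadd.isClosedUnderIsomorphisms
  induction j generalizing Y Z with
  | zero => exact hZ p hY
  | succ j ih =>
    intro M f _ hM
    obtain ⟨N, g, hN, _⟩ := hPR2 Y
    let W := pullback f (pullback.fst (kernel.ι p) g)
    have : Epi (biprod.desc (f ≫ kernel.ι p) (-g)) :=
      epi_of_epi_fac (f := -biprod.inr) (h := g) (by simp)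
    have hW : HasSyzygiesIn 𝒜 j W :=
      (HasSyzygiesIn 𝒜 j).prop_of_iso
        (kernelDescNegIso _ _ ≪≫ (pullbackRightPullbackFstIso (kernel.ι p) g f).symm)
        (hY (biprod.desc (f ≫ kernel.ι p) (-g)) (hadd.biprod hM hN))
    have hpull : 𝒜 (pullback (kernel.ι p) g) :=
      𝒜.prop_of_iso (pullbackKernelιIso g p).symm (hZ (g ≫ p) hN)
    exact (HasSyzygiesIn 𝒜 j).prop_of_iso
      (kernelIsoOfIsPullback (IsPullback.of_hasPullback f (pullback.fst (kernel.ι p) g)).flip)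
      (ih (pullback.snd f (pullback.fst (kernel.ι p) g)) hW (hdef.hasSyzygiesIn_one hpull))

lemma HasSyzygiesIn.succ_of_kernel (hadd : IsAdditiveClosed 𝒜) (hdef : DeflationClosed 𝒜)
    (hPR2 : PR2 𝒜) {j : ℕ} {A X : C} (f : A ⟶ X) [Epi f] (hA : 𝒜 A)
    (hf : HasSyzygiesIn 𝒜 (j + 1) (kernel f)) : HasSyzygiesIn 𝒜 (j + 2) X := by
  have := hadd.isClosedUnderIsomorphisms
  intro B g _ hB
  have sq := IsPullback.of_hasPullback f g
  have hpull : HasSyzygiesIn 𝒜 (j + 1) (pullback f g) :=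
    .of_kernel (pullback.snd f g)
      ((HasSyzygiesIn 𝒜 (j + 1)).prop_of_iso (kernelIsoOfIsPullback sq.flip).symm hf)
      (hdef.hasSyzygiesIn_one hB)
  exact (HasSyzygiesIn 𝒜 (j + 1)).prop_of_iso (kernelIsoOfIsPullback sq)
    (.to_kernel hadd hdef hPR2 (pullback.fst f g) hpull (hdef.hasSyzygiesIn_one hA))

end Syzygies

section Resolutions

variable {𝒜 : ObjectProperty C}

lemma IsResolutionOfLength.mono (hadd : IsAdditiveClosed 𝒜) {E : C} {m n : ℕ} (hmn : m ≤ n)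
    (h : IsResolutionOfLength 𝒜 E m) : IsResolutionOfLength 𝒜 E n := by
  obtain ⟨R, e, hpos, hneg, hmem, hex⟩ := h
  refine ⟨R, e, hpos, fun k hk ↦ hneg k (by lia), fun k _ hk ↦ ?_, hex⟩
  by_cases hkm : k < -(m : ℤ)
  · exact hadd.iso ((isZero_zero C).iso (hneg k hkm)) hadd.zero
  · exact hmem k (by lia) hk

lemma resdim_le_iff (hadd : IsAdditiveClosed 𝒜) {E : C} {n : ℕ} :
    resdim 𝒜 E ≤ n ↔ IsResolutionOfLength 𝒜 E n := by
  refine ⟨fun h ↦ ?_, fun h ↦ sInf_le ⟨n, rfl, h⟩⟩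
  obtain ⟨_, ⟨m, rfl, hm⟩, hlt⟩ := sInf_lt_iff.1 (h.trans_lt (Nat.cast_lt.2 n.lt_succ_self))
  exact hm.mono hadd (Nat.lt_succ_iff.1 (Nat.cast_lt.1 hlt))

lemma IsResolutionOfLength.hasSyzygiesIn (hadd : IsAdditiveClosed 𝒜) (hdef : DeflationClosed 𝒜)
    (hPR2 : PR2 𝒜) {E : C} {n : ℕ} (h : IsResolutionOfLength 𝒜 E n) :
    HasSyzygiesIn 𝒜 (n + 1) E := by
  have := hadd.isClosedUnderIsomorphisms
  obtain ⟨R, e, hpos, hneg, hmem, hex⟩ := h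
  have epi_toCycles {i j : ℤ} (hij : i + 1 = j) : Epi (R.toCycles i j) :=
    epi_toCycles_of_exactAt hij (hex j)
  have hcycles (j : ℕ) (hj : j ≤ n) : HasSyzygiesIn 𝒜 (j + 1) (R.cycles (-n + 1 + j)) := by
    induction j with
    | zero =>
      have hzero : IsZero (R.cycles (-n)) :=
        have := epi_toCycles (sub_add_cancel (-n : ℤ) 1)
        .of_epi (R.toCycles (-n - 1) (-n)) (hneg _ (by lia))
      have hi : -(n : ℤ) + 1 = -n + 1 + (0 : ℕ) := by simp
      have := epi_toCycles hi
      have := Preadditive.mono_of_isZero_kernel _ (hzero.of_iso (kernelToCyclesIso R hi))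
      have := isIso_of_mono_of_epi (R.toCycles (-n) (-n + 1 + (0 : ℕ)))
      exact hdef.hasSyzygiesIn_one
        (𝒜.prop_of_iso (asIso (R.toCycles (-n) _)) (hmem _ le_rfl (by lia)))
    | succ j ih =>
      have hi : -(n : ℤ) + 1 + j + 1 = -n + 1 + (j + 1 : ℕ) := by push_cast; ring
      have := epi_toCycles hi
      exact .succ_of_kernel hadd hdef hPR2 (R.toCycles _ _) (hmem _ (by lia) (by lia))
        ((HasSyzygiesIn 𝒜 (j + 1)).prop_of_iso (kernelToCyclesIso R hi).symm (ih (by lia)))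
  have : IsIso (R.iCycles 1) :=
    R.isIso_iCycles 1 2 (by simp) ((hpos 2 (by lia)).eq_of_tgt _ _)
  have hlast := hcycles n le_rfl
  rw [neg_add_cancel_comm] at hlast
  exact (HasSyzygiesIn 𝒜 (n + 1)).prop_of_iso (asIso (R.iCycles 1) ≪≫ e) hlast

end Resolutions

section Complexes

open CochainComplex

lemma quasiIso_mappingCone_map {K₁ L₁ K₂ L₂ : CochainComplex C ℤ} (φ₁ : K₁ ⟶ L₁) (φ₂ : K₂ ⟶ L₂)
    (a : K₁ ⟶ K₂) (b : L₁ ⟶ L₂) (comm : φ₁ ≫ b = a ≫ φ₂) [QuasiIso a] [QuasiIso b] :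
    QuasiIso (mappingCone.map φ₁ φ₂ a b comm) := by
  let _ : HasDerivedCategory.{max u v} C := HasDerivedCategory.standard C
  have distinguished {K L : CochainComplex C ℤ} (φ : K ⟶ L) :
      DerivedCategory.Q.mapTriangle.obj (mappingCone.triangle φ) ∈ distTriang _ :=
    (DerivedCategory.mem_distTriang_iff _).2 ⟨_, _, φ, ⟨Iso.refl _⟩⟩
  rw [← DerivedCategory.isIso_Q_map_iff_quasiIso]
  exact Pretriangulated.isIso₃_of_isIso₁₂
    (DerivedCategory.Q.mapTriangle.map (mappingCone.triangleMap φ₁ φ₂ a b comm))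
    (distinguished φ₁) (distinguished φ₂)
    (inferInstanceAs (IsIso (DerivedCategory.Q.map a)))
    (inferInstanceAs (IsIso (DerivedCategory.Q.map b)))

lemma exists_quasiIso_mappingCone_of_shortExact {S : ShortComplex (CochainComplex C ℤ)}
    (hS : S.ShortExact) {A : CochainComplex C ℤ} (a : A ⟶ S.X₁) [QuasiIso a] :
    ∃ f : mappingCone (a ≫ S.f) ⟶ S.X₃, QuasiIso f := by
  have := quasiIso_mappingCone_map (a ≫ S.f) S.f a (𝟙 S.X₂) (Category.comp_id _)
  have := mappingCone.quasiIso_descShortComplex hS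
  exact ⟨mappingCone.map (a ≫ S.f) S.f a (𝟙 S.X₂) (Category.comp_id _) ≫
    mappingCone.descShortComplex S, inferInstance⟩

variable {𝒜 : ObjectProperty C}

lemma IsAdditiveClosed.mappingCone_X (hadd : IsAdditiveClosed 𝒜) {K L : CochainComplex C ℤ}
    (φ : K ⟶ L) (hK : ∀ k, 𝒜 (K.X k)) (hL : ∀ k, 𝒜 (L.X k)) (k : ℤ) :
    𝒜 ((mappingCone φ).X k) :=
  hadd.iso (HomologicalComplex.homotopyCofiber.XIsoBiprod φ k (k + 1) rfl).symm
    (hadd.biprod (hK _) (hL _))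

/-- A family of morphisms `A n ⟶ E.X (n - 1)` extends to a chain map from the contractible complex
`mappingCone (𝟙 I)`, where `I` is the family `A` with zero differential. -/
lemma exists_degreewise_epi (hadd : IsAdditiveClosed 𝒜) (hPR2 : PR2 𝒜)
    (E : CochainComplex C ℤ) :
    ∃ (P : CochainComplex C ℤ) (φ : P ⟶ E), (∀ k, 𝒜 (P.X k)) ∧ ∀ k, Epi (φ.f k) := by
  choose A π hA hπ using fun n : ℤ ↦ hPR2 (E.X (n - 1))
  let I : CochainComplex C ℤ := { X := A, d := fun _ _ ↦ 0 }
  let α : HomComplex.Cochain I E (-1) :=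
    .mk fun p q hpq ↦ π p ≫ (E.XIsoOfEq (by lia : p - 1 = q)).hom
  let β : I ⟶ E := { f := fun n ↦ π n ≫ E.d (n - 1) n }
  let φ : mappingCone (𝟙 I) ⟶ E := mappingCone.desc (𝟙 I) α β (by
    ext n
    simp [α, β, I, HomComplex.δ_v (-1) 0 (by lia) α n n (by lia) (n - 1) (n + 1) (by lia) (by lia)])
  refine ⟨_, φ, hadd.mappingCone_X _ hA hA, fun k ↦ ?_⟩
  have hφ : (mappingCone.inl (𝟙 I)).v (k + 1) k (by lia) ≫ φ.f k =
      π (k + 1) ≫ (E.XIsoOfEq (by lia)).hom :=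
    mappingCone.inl_v_desc_f ..
  have := hπ (k + 1)
  exact epi_of_epi_fac hφ

/-- Induction on `j`: cover `E` degreewise, resolve the kernel `K`, and replace `K` by its
resolution in the quasi-isomorphism from the mapping cone of `K ⟶ P` to `E`. -/
lemma exists_quasiIso_of_hasSyzygiesIn (hadd : IsAdditiveClosed 𝒜) (hPR2 : PR2 𝒜) (j : ℕ)
    (E : CochainComplex C ℤ) (hE : ∀ k, HasSyzygiesIn 𝒜 j (E.X k)) :
    ∃ (A : CochainComplex C ℤ) (f : A ⟶ E), (∀ k, 𝒜 (A.X k)) ∧ QuasiIso f := by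
  have := hadd.isClosedUnderIsomorphisms
  induction j generalizing E with
  | zero => exact ⟨E, 𝟙 E, hE, inferInstance⟩
  | succ j ih =>
    obtain ⟨P, φ, hP, hφ⟩ := exists_degreewise_epi hadd hPR2 E
    have : Epi φ := HomologicalComplex.epi_of_epi_f φ hφ
    obtain ⟨A, a, hA, ha⟩ := ih (kernel φ) fun k ↦
      (HasSyzygiesIn 𝒜 j).prop_of_iso
        (PreservesKernel.iso (HomologicalComplex.eval C (.up ℤ) k) φ).symm (hE k (φ.f k) (hP k))
    obtain ⟨f, hf⟩ := exists_quasiIso_mappingCone_of_shortExact (shortExact_kernel φ) a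
    exact ⟨_, f, hadd.mappingCone_X _ hA hP, hf⟩

theorem exists_quasiIso_of_uniformly_preresolving_general (hadd : IsAdditiveClosed 𝒜)
    (hdef : DeflationClosed 𝒜) (hPR2 : PR2 𝒜) (n : ℕ) (E : CochainComplex C ℤ)
    (hE : ∀ k, resdim 𝒜 (E.X k) ≤ n) :
    ∃ (A : CochainComplex C ℤ) (f : A ⟶ E), (∀ k, 𝒜 (A.X k)) ∧ QuasiIso f :=
  exists_quasiIso_of_hasSyzygiesIn hadd hPR2 (n + 1) E fun k ↦
    ((resdim_le_iff hadd).1 (hE k)).hasSyzygiesIn hadd hdef hPR2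

end Complexes

/-- If `𝒜` is preresolving (deflation-closed and (PR2)) with `resdim_𝒜 (C) = n` finite,
then every unbounded cochain complex admits a quasi-isomorphism from a cochain complex
with all terms in `𝒜`. -/
theorem exists_quasiIso_of_uniformly_preresolving
    (𝒜 : C → Prop) (hadd : IsAdditiveClosed 𝒜)
    (hdef : DeflationClosed 𝒜) (hPR2 : PR2 𝒜)
    (n : ℕ) (hres : resdimCat 𝒜 = (n : ℕ∞))
    (E : CochainComplex C ℤ) :
    ∃ (A : CochainComplex C ℤ) (f : A ⟶ E),
      (∀ k : ℤ, 𝒜 (A.X k)) ∧ QuasiIso f :=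
  exists_quasiIso_of_uniformly_preresolving_general hadd hdef hPR2 n E fun k ↦
    (le_iSup (resdim 𝒜) (E.X k)).trans hres.le
end

section
/- Let 𝒞 be an abelian category and let 𝒜 be a full additive subcategory satisfying (C2'). Then every bounded-above cochain complex E• with all terms in 𝒜 which is acyclic in 𝒞 is homotopy equivalent to a bounded-above acyclic cochain complex A• all of whose terms and all of whose images of differentials lie in 𝒜. -/
open CategoryTheory CategoryTheory.Limits ZeroObject

universe v u

variable {C : Type u} [Category.{v} C] [Abelian C]

/-- A short exact sequence `0 → A → B → C → 0` in `C` with all terms in `𝒜` is an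
`𝒜`-conflation if for every morphism `h : D ⟶ C` with `D ∈ 𝒜`, the pullback of the
epimorphism along `h` lies in `𝒜`. -/
def IsAConflation (𝒜 : C → Prop) (S : ShortComplex C) : Prop :=
  S.ShortExact ∧ 𝒜 S.X₁ ∧ 𝒜 S.X₂ ∧ 𝒜 S.X₃ ∧
    ∀ (D : C) (h : D ⟶ S.X₃), 𝒜 D → 𝒜 (pullback S.g h)

/-- Axiom (C2'): every short exact sequence `0 → X → Y → C → 0` with `C ∈ 𝒜` receives a
morphism from an `𝒜`-conflation `0 → A → B → C → 0` over the identity of `C`. -/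
def C2' (𝒜 : C → Prop) : Prop :=
  ∀ ⦃X Y Z : C⦄ (i : X ⟶ Y) (p : Y ⟶ Z) (w : i ≫ p = 0),
    (ShortComplex.mk i p w).ShortExact → 𝒜 Z →
    ∃ (A B : C) (i' : A ⟶ B) (p' : B ⟶ Z) (w' : i' ≫ p' = 0)
      (a : A ⟶ X) (b : B ⟶ Y),
      IsAConflation 𝒜 (ShortComplex.mk i' p' w') ∧ i' ≫ b = a ≫ i ∧ b ≫ p = p'

/-!
Call `X` stably in `𝒜` if `X ⊞ B ∈ 𝒜` for some `B ∈ 𝒜`. For a short exact sequence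
`0 → X → Y → Z → 0` with `Y, Z ∈ 𝒜`, axiom (C2') gives an `𝒜`-conflation `B ⟶ Z` which factors
through `Y ⟶ Z`. The pullback of the two maps to `Z` lies in `𝒜`, and it is `X ⊞ B` because `Y ⟶ Z`
splits after pulling back to `B`; so `X` is stably in `𝒜`. Adding a summand to `Y` and `Z`, it is
enough that `Z` is stably in `𝒜`. Hence, descending from the degrees where `E` vanishes, all the
cycles of `E` are stably in `𝒜`, and adding to `E` contractible complexes `B = B`, one for each
degree, replaces the cycles `Zᵏ` by `Zᵏ ⊞ Bᵏ ∈ 𝒜` without changing the homotopy type.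
-/

section ShortExact

lemma isPullback_desc_snd_of_shortExact {S : ShortComplex C} (hS : S.ShortExact) {B : C}
    (b : B ⟶ S.X₂) : IsPullback (biprod.desc S.f b) biprod.snd S.g (b ≫ S.g) := by
  have := hS.mono_f
  refine .mk' (by ext <;> simp) (fun T φ ψ h₁ h₂ ↦ ?_) (fun T y t h ↦ ?_)
  · simp only [biprod.desc_eq, Preadditive.comp_add, reassoc_of% h₂, add_left_inj] at h₁
    refine biprod.hom_ext _ _ ?_ h₂
    simpa [← cancel_mono S.f] using h₁
  · have hker : (y - t ≫ b) ≫ S.g = 0 := by simp [h]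
    exact ⟨biprod.lift (hS.exact.lift _ hker) t, by simp, by simp⟩

lemma shortExact_biprod_id {S : ShortComplex C} (hS : S.ShortExact) (B : C) :
    (ShortComplex.mk (S.f ≫ biprod.inl) (biprod.map S.g (𝟙 B)) (by simp)).ShortExact := by
  have := hS.mono_f
  have := hS.epi_g
  refine .mk' (ShortComplex.exact_of_f_is_kernel _ ?_) (mono_comp _ _) (biprod.map_epi _ _)
  refine KernelFork.IsLimit.ofι' _ _ fun {T} y hy ↦ ?_
  have hfst : (y ≫ biprod.fst) ≫ S.g = 0 := by simpa using hy =≫ biprod.fst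
  have hsnd : y ≫ biprod.snd = 0 := by simpa using hy =≫ biprod.snd
  exact ⟨hS.exact.lift _ hfst, by ext <;> simp [hsnd]⟩

end ShortExact

section StablyIn

/-- `X` is stably in `𝒜` if it has a complement `B` in `𝒜` such that `X ⊞ B` lies in `𝒜`. -/
def StablyIn (𝒜 : C → Prop) (X : C) : Prop :=
  ∃ B : C, 𝒜 B ∧ 𝒜 (X ⊞ B)

variable {𝒜 : C → Prop}

lemma IsAdditiveClosed.of_isZero (hadd : IsAdditiveClosed 𝒜) {X : C} (hX : IsZero X) : 𝒜 X :=
  hadd.iso hX.isoZero.symm hadd.zero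

lemma StablyIn.of_isZero (hadd : IsAdditiveClosed 𝒜) {X : C} (hX : IsZero X) : StablyIn 𝒜 X :=
  ⟨0, hadd.zero, hadd.of_isZero ((biprod_isZero_iff _ _).2 ⟨hX, isZero_zero C⟩)⟩

lemma StablyIn.of_shortExact (hadd : IsAdditiveClosed 𝒜) (hC2 : C2' 𝒜) {S : ShortComplex C}
    (hS : S.ShortExact) (h₂ : 𝒜 S.X₂) (h₃ : StablyIn 𝒜 S.X₃) : StablyIn 𝒜 S.X₁ := by
  obtain ⟨D, hD, hZD⟩ := h₃
  have hSD := shortExact_biprod_id hS D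
  obtain ⟨_, B, _, _, _, -, b, ⟨-, -, hB, -, hpullback⟩, -, rfl⟩ := hC2 _ _ _ hSD hZD
  exact ⟨B, hB, hadd.iso (isPullback_desc_snd_of_shortExact hSD b).flip.isoPullback.symm
    (hpullback _ _ (hadd.biprod h₂ hD))⟩

end StablyIn

section Complexes

variable {V ι : Type*} [Category* V] {c : ComplexShape ι} {i j : ι}

section Preadditive

variable [Preadditive V]

noncomputable def homotopyEquivBiprodOfContractible [HasBinaryBiproducts V]
    (K : HomologicalComplex V c) {L : HomologicalComplex V c} (h : Homotopy (𝟙 L) 0) :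
    HomotopyEquiv K (K ⊞ L) where
  hom := biprod.inl
  inv := biprod.fst
  homotopyHomInvId := .ofEq biprod.inl_fst
  homotopyInvHomId :=
    have hL : Homotopy (biprod.snd ≫ biprod.inr : K ⊞ L ⟶ K ⊞ L) 0 :=
      (Homotopy.ofEq (by simp)).trans
        (((h.compRight biprod.inr).compLeft biprod.snd).trans (.ofEq (by simp)))
    (Homotopy.ofEq (add_zero _).symm).trans
      (((Homotopy.refl (biprod.fst ≫ biprod.inl)).add hL.symm).trans (.ofEq biprod.total))

variable [CategoryWithHomology V]

lemma exactAt_of_contractible {K : HomologicalComplex V c} (h : Homotopy (𝟙 K) 0) (i : ι) :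
    K.ExactAt i := by
  rw [HomologicalComplex.exactAt_iff_isZero_homology, IsZero.iff_id_eq_zero]
  simpa using h.homologyMap_eq i

lemma epi_toCycles_of_exactAt_s14 {K : HomologicalComplex V c} (hij : c.Rel i j)
    (hj : K.ExactAt j) : Epi (K.toCycles i j) := by
  obtain rfl := c.prev_eq' hij
  exact hj.epi_toCycles

lemma shortExact_iCycles_toCycles {K : HomologicalComplex V c} (hij : c.Rel i j)
    (hj : K.ExactAt j) :
    (ShortComplex.mk (K.iCycles i) (K.toCycles i j)
      (by simp [← cancel_mono (K.iCycles j)])).ShortExact :=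
  .mk' (ShortComplex.exact_of_f_is_kernel _
      (isKernelOfComp _ _ (K.cyclesIsKernel i j (c.next_eq' hij)) _ (K.toCycles_i i j)))
    inferInstance (epi_toCycles_of_exactAt_s14 hij hj)

instance cyclesFunctor_additive (i : ι) :
    (HomologicalComplex.cyclesFunctor V c i).Additive where
  map_add {K L f g} := by
    change HomologicalComplex.cyclesMap (f + g) i =
      HomologicalComplex.cyclesMap f i + HomologicalComplex.cyclesMap g i
    simp [← cancel_mono (L.iCycles i)]

noncomputable def cyclesBiprodIso [HasBinaryBiproducts V] (K L : HomologicalComplex V c) (i : ι) :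
    (K ⊞ L).cycles i ≅ K.cycles i ⊞ L.cycles i :=
  have := preservesBinaryBiproducts_of_preservesBiproducts
    (HomologicalComplex.cyclesFunctor V c i)
  (HomologicalComplex.cyclesFunctor V c i).mapBiprod K L

end Preadditive

/-- The isomorphism under which `factorThruImage (K.d i j)` corresponds to `K.toCycles i j`. -/
noncomputable def imageDIsoCycles [Abelian V] {K : HomologicalComplex V c} (hij : c.Rel i j)
    (hj : K.ExactAt j) : image (K.d i j) ≅ K.cycles j :=
  have := epi_toCycles_of_exactAt_s14 hij hj
  have := strongEpi_of_epi (K.toCycles i j)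
  (image.isoStrongEpiMono (K.toCycles i j) (K.iCycles j) (K.toCycles_i i j)).symm

end Complexes

section DiskSum

open CochainComplex

/-- The cochain complex with terms `B k` and zero differentials. -/
def zeroDifferential {V : Type*} [Category* V] [HasZeroMorphisms V] (B : ℤ → V) :
    CochainComplex V ℤ where
  X := B
  d _ _ := 0

@[simp]
lemma zeroDifferential_d {V : Type*} [Category* V] [HasZeroMorphisms V] (B : ℤ → V) (i j : ℤ) :
    (zeroDifferential B).d i j = 0 := rfl

section Preadditive

variable {V : Type*} [Category* V] [Preadditive V] [HasBinaryBiproducts V] (B : ℤ → V)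

/-- The direct sum over `k` of the contractible complexes `B k = B k` in degrees `k - 1` and `k`,
encoded as the mapping cone of the identity of the complex with terms `B k` and zero
differentials. -/
noncomputable abbrev diskSum : CochainComplex V ℤ :=
  mappingCone (𝟙 (zeroDifferential B))

noncomputable def diskSumXIso (k : ℤ) : (diskSum B).X k ≅ B (k + 1) ⊞ B k :=
  HomologicalComplex.homotopyCofiber.XIsoBiprod (𝟙 (zeroDifferential B)) k (k + 1) rfl

lemma diskSum_d {i j : ℤ} (hij : i + 1 = j) :
    (diskSum B).d i j =
      (mappingCone.fst (𝟙 (zeroDifferential B))).1.v i j hij ≫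
        (mappingCone.inr (𝟙 (zeroDifferential B))).f j := by
  refine (mappingCone.ext_to_iff _ j (j + 1) rfl _ _).2 ⟨?_, ?_⟩
  · simp [mappingCone.d_fst_v _ i j _ hij rfl]
  · simp [mappingCone.d_snd_v _ i j hij]

end Preadditive

/-- The cycles of `diskSum B` in degree `k` are the summand `B k` of its term `B (k + 1) ⊞ B k`. -/
noncomputable def diskSumCyclesIso (B : ℤ → C) (k : ℤ) : (diskSum B).cycles k ≅ B k :=
  have hk : k - 1 + 1 = k := sub_add_cancel k 1
  let π := (mappingCone.fst (𝟙 (zeroDifferential B))).1.v (k - 1) k hk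
  let ι := (mappingCone.inr (𝟙 (zeroDifferential B))).f k
  have : Epi π := epi_of_epi_fac (mappingCone.inl_v_fst_v _ k (k - 1) hk)
  have : Mono ι := mono_of_mono_fac (mappingCone.inr_f_snd_v _ k)
  have := strongEpi_of_epi π
  (imageDIsoCycles hk (exactAt_of_contractible (mappingCone.homotopyToZeroOfId _) k)).symm ≪≫
    (image.isoStrongEpiMono π ι (diskSum_d B hk).symm).symm

end DiskSum

section BoundedAbove

variable {𝒜 : C → Prop}

lemma StablyIn.cycles_of_le (hadd : IsAdditiveClosed 𝒜) (hC2 : C2' 𝒜) {E : CochainComplex C ℤ}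
    {n : ℤ} (hn : StablyIn 𝒜 (E.cycles n)) (hterms : ∀ k < n, 𝒜 (E.X k))
    (hexact : ∀ k ≤ n, E.ExactAt k) {k : ℤ} (hk : k ≤ n) : StablyIn 𝒜 (E.cycles k) := by
  induction k, hk using Int.leInductionDown with
  | base => exact hn
  | pred k hk ih =>
    exact .of_shortExact hadd hC2 (shortExact_iCycles_toCycles (by simp) (hexact k hk))
      (hterms (k - 1) (by lia)) ih

lemma exists_complement_cycles (hadd : IsAdditiveClosed 𝒜) (hC2 : C2' 𝒜)
    {E : CochainComplex C ℤ} {b : ℤ} (hb : ∀ k, b < k → IsZero (E.X k))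
    (hterms : ∀ k ≤ b, 𝒜 (E.X k)) (hexact : ∀ k ≤ b + 1, E.ExactAt k) (k : ℤ) :
    ∃ B : C, 𝒜 B ∧ 𝒜 (E.cycles k ⊞ B) ∧ (b < k → IsZero B) := by
  have isZero_cycles (k : ℤ) (hk : b < k) : IsZero (E.cycles k) := (hb k hk).of_mono (E.iCycles k)
  obtain hk | hk := lt_or_ge b k
  · exact ⟨0, hadd.zero, hadd.biprod (hadd.of_isZero (isZero_cycles k hk)) hadd.zero,
      fun _ ↦ isZero_zero C⟩
  · have htop : StablyIn 𝒜 (E.cycles (b + 1)) := .of_isZero hadd (isZero_cycles _ (by lia))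
    obtain ⟨B, hB, hEB⟩ := htop.cycles_of_le hadd hC2 (fun k hk ↦ hterms k (by lia)) hexact
      (show k ≤ b + 1 by lia)
    exact ⟨B, hB, hEB, fun h ↦ absurd hk h.not_ge⟩

end BoundedAbove

/-- If `𝒜` satisfies (C2'), then every bounded-above acyclic cochain complex with all
terms in `𝒜` is homotopy equivalent to a bounded-above acyclic cochain complex all of
whose terms and all of whose images of differentials lie in `𝒜`. -/
theorem homotopyEquiv_acyclic_of_C2'
    (𝒜 : C → Prop) (hadd : IsAdditiveClosed 𝒜) (hC2 : C2' 𝒜)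
    (E : CochainComplex C ℤ) (b : ℤ) (hb : ∀ k : ℤ, b < k → IsZero (E.X k))
    (hterms : ∀ k : ℤ, 𝒜 (E.X k)) (hacy : ∀ k : ℤ, E.ExactAt k) :
    ∃ (A : CochainComplex C ℤ) (b' : ℤ),
      (∀ k : ℤ, b' < k → IsZero (A.X k)) ∧
      (∀ k : ℤ, 𝒜 (A.X k)) ∧
      (∀ k : ℤ, A.ExactAt k) ∧
      (∀ k : ℤ, 𝒜 (image (A.d k (k + 1)))) ∧
      Nonempty (HomotopyEquiv E A) := by
  choose B hB hEB hBzero using exists_complement_cycles hadd hC2 hb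
    (fun k _ ↦ hterms k) (fun k _ ↦ hacy k)
  let e : HomotopyEquiv E (E ⊞ diskSum B) :=
    homotopyEquivBiprodOfContractible E (CochainComplex.mappingCone.homotopyToZeroOfId _)
  have hexact (k : ℤ) : (E ⊞ diskSum B).ExactAt k := (exactAt_iff_of_quasiIsoAt e.hom k).1 (hacy k)
  refine ⟨E ⊞ diskSum B, b, fun k hk ↦ ?_, fun k ↦ ?_, hexact, fun k ↦ ?_, ⟨e⟩⟩
  · rw [(HomologicalComplex.biprodXIso E (diskSum B) k).isZero_iff, biprod_isZero_iff,
      CochainComplex.mappingCone.isZero_X_iff]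
    exact ⟨hb k hk, hBzero (k + 1) (by lia), hBzero k hk⟩
  · exact hadd.iso (HomologicalComplex.biprodXIso E (diskSum B) k).symm
      (hadd.biprod (hterms k) (hadd.iso (diskSumXIso B k).symm (hadd.biprod (hB _) (hB k))))
  · have hcycles : 𝒜 ((E ⊞ diskSum B).cycles (k + 1)) :=
      hadd.iso (biprod.mapIso (Iso.refl _) (diskSumCyclesIso B (k + 1)).symm ≪≫
        (cyclesBiprodIso E (diskSum B) (k + 1)).symm) (hEB (k + 1))
    exact hadd.iso (imageDIsoCycles rfl (hexact (k + 1))).symm hcycles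
end
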